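/- Let q be a prime power with q > 2 and let S be an algebraic hypersurface of PG(6,q^2) of degree q+1 defined over GF(q^2), not containing any solid, with exactly q^11 + q^9 + q^7 + q^4 + q^2 + 1 rational points. Let Sigma_3 be a solid with |S ∩ Sigma_3| = q^4 + q^2 + 1, so that Pi := S ∩ Sigma_3 is a plane. Then every solid of PG(6,q^2) containing the plane Pi and different from Sigma_3 meets S in exactly q^5 + q^4 + q^2 + 1 rational points. -/

import Mathlib

open MvPolynomial Module

/-- The set of points of the projective subspace of `PG(n-1, F)` determined by
the linear subspace `W` of `F^n`. -/
def projPts {F : Type} [Field F] {n : ℕ} (W : Submodule F (Fin n → F)) :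
    Set (Projectivization F (Fin n → F)) :=
  {P | P.submodule ≤ W}

/-- The set of `F`-rational points of the hypersurface of `PG(n-1, F)` defined by the
homogeneous polynomial `f`. -/
def hypersurfacePts {F : Type} [Field F] {n : ℕ} (f : MvPolynomial (Fin n) F) :
    Set (Projectivization F (Fin n → F)) :=
  {P | MvPolynomial.eval P.rep f = 0}

theorem diff_deg {F : Type} [Field F] {n m : ℕ} (l : Fin n → MvPolynomial (Fin m) F) (c : Fin n → F)
    (hl : ∀ i, (l i).totalDegree ≤ 1) (s : Multiset (Fin n)) :
    ((s.map l).prod).totalDegree ≤ s.card ∧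
    ((s.map (fun i => l i + C (c i))).prod - (s.map l).prod).totalDegree ≤ s.card - 1 := by
  induction s using Multiset.induction_on with
  | empty => simp
  | cons a s ih =>
    obtain ⟨h1, h2⟩ := ih
    have hA : (l a * (s.map l).prod).totalDegree ≤ s.card + 1 :=
      (totalDegree_mul _ _).trans (by have := hl a; omega)
    refine ⟨by simpa using hA, ?_⟩
    simp only [Multiset.map_cons, Multiset.prod_cons, Multiset.card_cons, Nat.add_sub_cancel]
    have e : (l a + C (c a)) * (s.map (fun i => l i + C (c i))).prod - l a * (s.map l).prod
        = (l a + C (c a)) * ((s.map (fun i => l i + C (c i))).prod - (s.map l).prod)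
          + C (c a) * (s.map l).prod := by ring
    rw [e]
    have hB : (C (c a) * (s.map l).prod).totalDegree ≤ s.card :=
      (totalDegree_mul _ _).trans (by simpa using h1)
    have hC : (l a + C (c a)).totalDegree ≤ 1 :=
      (totalDegree_add _ _).trans (by simpa using hl a)
    refine (totalDegree_add _ _).trans (max_le ?_ hB)
    rcases Multiset.empty_or_exists_mem s with rfl | ⟨b, hb⟩
    · simp
    · have : 0 < s.card := Multiset.card_pos_iff_exists_mem.2 ⟨b, hb⟩
      exact (totalDegree_mul _ _).trans (by omega)

theorem aeval_monomial_ms {F : Type} [Field F] {n m : ℕ} (l : Fin n → MvPolynomial (Fin m) F)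
    (s : Fin n →₀ ℕ) (a : F) :
    aeval l (monomial s a) = C a * ((Finsupp.toMultiset s).map l).prod := by
  rw [aeval_monomial, Finsupp.toMultiset_map, Finsupp.prod_toMultiset,
    Finsupp.prod_mapDomain_index (by simp) (by intros; rw [pow_add])]
  rfl

theorem diff_deg' {F : Type} [Field F] {n m d : ℕ} (l : Fin n → MvPolynomial (Fin m) F) (c : Fin n → F)
    (hl : ∀ i, (l i).totalDegree ≤ 1) (f : MvPolynomial (Fin n) F) (hf : f.IsHomogeneous (d + 1)) :
    (aeval (fun i => l i + C (c i)) f - aeval l f).totalDegree ≤ d := by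
  rw [f.as_sum, map_sum, map_sum, ← Finset.sum_sub_distrib]
  refine totalDegree_finsetSum_le fun s hs => ?_
  rw [aeval_monomial_ms, aeval_monomial_ms, ← mul_sub]
  refine (totalDegree_mul _ _).trans ?_
  have h := (diff_deg l c hl (Finsupp.toMultiset s)).2
  have h3 : s.degree = d + 1 := by
    rw [Finsupp.degree_eq_weight_one]; exact hf (mem_support_iff.1 hs)
  rw [Finsupp.card_toMultiset] at h
  have h4 : (s.sum fun _ => id) = d + 1 := h3
  rw [totalDegree_C]
  omega

theorem eval_smul_hom {F : Type} [Field F] {n d : ℕ} (f : MvPolynomial (Fin n) F)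
    (hf : f.IsHomogeneous d) (a : F) (v : Fin n → F) :
    eval (a • v) f = a ^ d * eval v f := by
  rw [eval_eq, eval_eq, Finset.mul_sum]
  refine Finset.sum_congr rfl fun s hs => ?_
  have h3 : s.degree = d := by
    rw [Finsupp.degree_eq_weight_one]; exact hf (mem_support_iff.1 hs)
  simp only [Pi.smul_apply, smul_eq_mul, mul_pow, Finset.prod_mul_distrib]
  rw [Finset.prod_pow_eq_pow_sum, ← h3, Finsupp.degree_apply]
  ring

theorem mem_projPts {F : Type} [Field F] {n : ℕ} (W : Submodule F (Fin n → F))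
    (P : Projectivization F (Fin n → F)) : P ∈ projPts W ↔ P.rep ∈ W := by
  simp [projPts, Projectivization.submodule_eq]

theorem mk_mem_projPts {F : Type} [Field F] {n : ℕ} (W : Submodule F (Fin n → F))
    (v : Fin n → F) (hv : v ≠ 0) : Projectivization.mk F v hv ∈ projPts W ↔ v ∈ W := by
  simp [projPts, Projectivization.submodule_mk]

theorem mk_mem_hyp {F : Type} [Field F] {n d : ℕ} (f : MvPolynomial (Fin n) F)
    (hf : f.IsHomogeneous d) (v : Fin n → F) (hv : v ≠ 0) :
    Projectivization.mk F v hv ∈ hypersurfacePts f ↔ eval v f = 0 := by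
  obtain ⟨a, ha⟩ := Projectivization.exists_smul_eq_mk_rep F v hv
  simp only [hypersurfacePts, Set.mem_ofPred_eq]
  rw [← ha, Units.smul_def, eval_smul_hom f hf]
  simp

theorem card_projPts {F : Type} [Field F] [Fintype F] {n : ℕ} (W : Submodule F (Fin n → F)) :
    (projPts W).ncard = ∑ i ∈ Finset.range (finrank F W), Fintype.card F ^ i := by
  rw [← Nat.card_eq_fintype_card, ← Projectivization.card_of_finrank F W rfl]
  have : projPts W = Set.range (Projectivization.map W.subtype W.injective_subtype) := by
    ext P
    constructor
    · intro h
      have h' := (mem_projPts W P).1 h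
      refine ⟨Projectivization.mk F ⟨P.rep, h'⟩ (by simpa using P.rep_nonzero), ?_⟩
      rw [Projectivization.map_mk]
      exact P.mk_rep
    · rintro ⟨Q, rfl⟩
      induction Q using Projectivization.ind with
      | h v hv => 
        rw [Projectivization.map_mk, mk_mem_projPts]
        exact v.2
  rw [this, ← Set.image_univ, Set.ncard_image_of_injective _ (Projectivization.map_injective _ _),
    Set.ncard_univ]

theorem offplane_bound {q : ℕ} (hq2 : 2 < q)
    {F : Type} [Field F] [Fintype F] (hcardF : Fintype.card F = q ^ 2)
    (f : MvPolynomial (Fin 7) F) (hfdeg : f.IsHomogeneous (q + 1))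
    (Q : Submodule F (Fin 7 → F)) (hQ : finrank F Q = 3) (hQS : projPts Q ⊆ hypersurfacePts f)
    (v : Fin 7 → F) (hv : v ∉ Q) (hns : ¬ projPts (Q ⊔ F ∙ v) ⊆ hypersurfacePts f) :
    (hypersurfacePts f ∩ (projPts (Q ⊔ F ∙ v) \ projPts Q)).ncard ≤ q ^ 5 := by
  classical
  let b := Module.finBasisOfFinrankEq F Q hQ
  let l : Fin 7 → MvPolynomial (Fin 3) F := fun i => ∑ j, C ((b j : Fin 7 → F) i) * X j
  let φ : (Fin 3 → F) → (Fin 7 → F) := fun x => ∑ j, x j • (b j : Fin 7 → F)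
  have hφQ : ∀ x, φ x ∈ Q := fun x => Q.sum_mem fun j _ => Q.smul_mem _ (b j).2
  have hφs : ∀ w ∈ Q, ∃ x, φ x = w := by
    intro w hw
    refine ⟨fun j => b.repr ⟨w, hw⟩ j, ?_⟩
    have := congrArg Subtype.val (b.sum_repr ⟨w, hw⟩)
    rw [AddSubmonoidClass.coe_finsetSum] at this
    exact this
  have hl0 : ∀ i, (l i).IsHomogeneous 1 := fun i =>
    IsHomogeneous.sum _ _ _ fun j _ => by
      simpa using (isHomogeneous_C (Fin 3) _).mul (isHomogeneous_X F j)
  have hl : ∀ i, (l i).totalDegree ≤ 1 := fun i => (hl0 i).totalDegree_le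
  have hle : ∀ x i, eval x (l i) = φ x i := by
    intro x i
    simp [l, φ, Finset.sum_apply, mul_comm]
  have ev0 : ∀ x, eval x (aeval l f) = eval (φ x) f := by
    intro x
    rw [← aeval_eq_eval, ← aeval_eq_eval, ← AlgHom.comp_apply, comp_aeval]
    congr 2
    ext i; rw [aeval_eq_eval]; exact hle x i
  have ev1 : ∀ x, eval x (aeval (fun i => l i + C (v i)) f) = eval (φ x + v) f := by
    intro x
    rw [← aeval_eq_eval, ← aeval_eq_eval, ← AlgHom.comp_apply, comp_aeval]
    congr 2
    ext i; rw [aeval_eq_eval]; simpa using hle x i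
  have hz : aeval l f = 0 := by
    have hh : (aeval l f).IsHomogeneous (1 * (q + 1)) := hfdeg.aeval l hl0
    refine hh.eq_zero_of_forall_eval_eq_zero_of_le_card (fun x => ?_) ?_
    · rw [ev0]
      by_cases h0 : φ x = 0
      · rw [h0]
        have := eval_smul_hom f hfdeg 0 0
        simpa using this
      · exact (mk_mem_hyp f hfdeg _ h0).1 (hQS ((mk_mem_projPts _ _ _).2 (hφQ x)))
    · rw [Cardinal.mk_fintype, hcardF]
      exact_mod_cast (by nlinarith : 1 * (q + 1) ≤ q ^ 2)
  set h := aeval (fun i => l i + C (v i)) f with hh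
  have hdeg : h.totalDegree ≤ q := by
    have := diff_deg' l v hl f hfdeg
    rwa [hz, sub_zero] at this
  have hne : ∀ x, φ x + v ≠ 0 := by
    intro x hx
    apply hv
    rw [← neg_eq_of_add_eq_zero_right hx]
    exact Q.neg_mem (hφQ x)
  have hcov : ∀ P ∈ projPts (Q ⊔ F ∙ v) \ projPts Q, ∃ x, Projectivization.mk F _ (hne x) = P := by
    rintro P ⟨hP1, hP2⟩
    rw [mem_projPts] at hP1 hP2
    obtain ⟨y, hy, z, hz, hyz⟩ := Submodule.mem_sup.1 hP1
    obtain ⟨a, rfl⟩ := Submodule.mem_span_singleton.1 hz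
    have ha : a ≠ 0 := by
      rintro rfl
      apply hP2
      rw [← hyz]; simpa using hy
    obtain ⟨x, hx⟩ := hφs (a⁻¹ • y) (Q.smul_mem _ hy)
    refine ⟨x, ?_⟩
    rw [← P.mk_rep, Projectivization.mk_eq_mk_iff']
    refine ⟨a⁻¹, ?_⟩
    rw [← hyz, hx, smul_add, smul_smul, inv_mul_cancel₀ ha, one_smul]
  have hh0 : h ≠ 0 := by
    intro h0
    apply hns
    intro P hP
    by_cases hPQ : P ∈ projPts Q
    · exact hQS hPQ
    · obtain ⟨x, rfl⟩ := hcov P ⟨hP, hPQ⟩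
      rw [mk_mem_hyp f hfdeg, ← ev1, h0, map_zero]
  have hsub : hypersurfacePts f ∩ (projPts (Q ⊔ F ∙ v) \ projPts Q) ⊆
      Set.image (fun x => Projectivization.mk F _ (hne x)) {x : Fin 3 → F | eval x h = 0} := by
    rintro P ⟨hP1, hP2⟩
    obtain ⟨x, rfl⟩ := hcov P hP2
    refine ⟨x, ?_, rfl⟩
    rw [mk_mem_hyp f hfdeg, ← ev1] at hP1
    exact hP1
  refine (Set.ncard_le_ncard hsub (Set.toFinite _)).trans ((Set.ncard_image_le (Set.toFinite _)).trans ?_)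
  have sz := schwartz_zippel_totalDegree hh0 (Finset.univ : Finset F)
  have e1 : ({x : Fin 3 → F | eval x h = 0}).ncard =
      (Finset.filter (fun x => eval x h = 0) (Fintype.piFinset fun _ : Fin 3 => (Finset.univ : Finset F))).card := by
    rw [← Set.ncard_coe_finset]; congr 1; ext x; simp
  rw [e1]
  rw [Finset.card_univ, hcardF] at sz
  have hq0 : (0 : ℚ≥0) < q := by exact_mod_cast (by omega : 0 < q)
  rw [div_le_div_iff₀ (by positivity) (by positivity)] at sz
  norm_cast at sz
  have : 0 < q ^ 2 := by positivity
  refine Nat.le_of_mul_le_mul_right (sz.trans ?_) this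
  calc h.totalDegree * (q ^ 2) ^ 3 ≤ q * (q ^ 2) ^ 3 := Nat.mul_le_mul_right _ hdeg
    _ = q ^ 5 * q ^ 2 := by ring

/-- Under the hypotheses of the main theorem, with `Π := S ∩ Σ₃` the plane in which the
special solid `Σ₃` meets `S`, every solid containing `Π` other than `Σ₃` meets `S` in
exactly `q⁵ + q⁴ + q² + 1` rational points. -/
theorem stmt_9 (q : ℕ) (hq : ∃ p k : ℕ, p.Prime ∧ 0 < k ∧ q = p ^ k) (hq2 : 2 < q)
    (F : Type) [Field F] [Fintype F] (hcardF : Fintype.card F = q ^ 2)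
    (f : MvPolynomial (Fin 7) F) (hf0 : f ≠ 0) (hfdeg : f.IsHomogeneous (q + 1))
    (S : Set (Projectivization F (Fin 7 → F))) (hS : S = hypersurfacePts f)
    (hnosolid : ¬ ∃ W : Submodule F (Fin 7 → F), Module.finrank F W = 4 ∧ projPts W ⊆ S)
    (hcardS : S.ncard = q ^ 11 + q ^ 9 + q ^ 7 + q ^ 4 + q ^ 2 + 1)
    (W₃ : Submodule F (Fin 7 → F)) (hW₃ : Module.finrank F W₃ = 4)
    (hint : (S ∩ projPts W₃).ncard = q ^ 4 + q ^ 2 + 1) :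
    ∀ W : Submodule F (Fin 7 → F), Module.finrank F W = 4 → W ≠ W₃ →
      S ∩ projPts W₃ ⊆ projPts W →
      (S ∩ projPts W).ncard = q ^ 5 + q ^ 4 + q ^ 2 + 1 := by
  classical
  intro W hW hne hsub
  subst hS
  obtain ⟨Q, hQdef⟩ : ∃ Q, Q = W ⊓ W₃ := ⟨_, rfl⟩
  have hQW : Q ≤ W := hQdef ▸ inf_le_left
  have hQW₃ : Q ≤ W₃ := hQdef ▸ inf_le_right
  have hQ3 : finrank F Q ≤ 3 := by
    by_contra hcon
    have h1 := Submodule.eq_of_le_of_finrank_le hQW (by omega)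
    have h2 := Submodule.eq_of_le_of_finrank_le hQW₃ (by omega)
    exact hne (h1.symm.trans h2)
  have hSQ : hypersurfacePts f ∩ projPts W₃ ⊆ projPts Q := by
    intro P hP
    have h1 := hsub hP
    have h2 := hP.2
    rw [mem_projPts] at h1 h2 ⊢
    rw [hQdef]
    exact ⟨h1, h2⟩
  have hle := Set.ncard_le_ncard hSQ (Set.toFinite _)
  have hcQ := card_projPts Q
  rw [hcardF] at hcQ
  have hQ : finrank F Q = 3 := by
    rw [hint, hcQ] at hle
    by_contra hcon
    have : ∑ i ∈ Finset.range (finrank F Q), (q ^ 2) ^ i ≤ ∑ i ∈ Finset.range 2, (q ^ 2) ^ i :=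
      Finset.sum_le_sum_of_subset (Finset.range_mono (by omega))
    simp only [Finset.sum_range_succ, Finset.sum_range_zero, pow_zero, pow_one] at this
    have : 0 < q ^ 4 := by positivity
    omega
  rw [hQ] at hcQ
  simp only [Finset.sum_range_succ, Finset.sum_range_zero] at hcQ
  have hcQ' : (projPts Q).ncard = q ^ 4 + q ^ 2 + 1 := by rw [hcQ]; ring
  have hEq : hypersurfacePts f ∩ projPts W₃ = projPts Q :=
    Set.eq_of_subset_of_ncard_le hSQ (by omega) (Set.toFinite _)
  have hQS : projPts Q ⊆ hypersurfacePts f := hEq ▸ Set.inter_subset_left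
  let U : Projectivization F ((Fin 7 → F) ⧸ Q) → Submodule F (Fin 7 → F) :=
    fun L => L.submodule.comap Q.mkQ
  have hnz : ∀ v, v ∉ Q → Q.mkQ v ≠ 0 := by
    intro v hv h
    exact hv ((Submodule.Quotient.mk_eq_zero Q).1 h)
  have hU : ∀ v (hv : v ∉ Q), U (Projectivization.mk F (Q.mkQ v) (hnz v hv)) = Q ⊔ F ∙ v := by
    intro v hv
    simp only [U]
    rw [Projectivization.submodule_mk, ← Submodule.comap_map_mkQ, Submodule.map_span,
      Set.image_singleton]
  have hUs : ∀ L, ∃ v, ∃ hv : v ∉ Q, L = Projectivization.mk F (Q.mkQ v) (hnz v hv) := by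
    intro L
    obtain ⟨v, hv⟩ := Q.mkQ_surjective L.rep
    have hvQ : v ∉ Q := by
      intro h
      apply L.rep_nonzero
      rw [← hv]
      exact (Submodule.Quotient.mk_eq_zero Q).2 h
    refine ⟨v, hvQ, ?_⟩
    rw [← L.mk_rep]
    simp only [hv]
  have hex : ∀ W' : Submodule F (Fin 7 → F), finrank F W' = 4 → Q ≤ W' → ∃ L, U L = W' := by
    intro W' hW' hQW'
    obtain ⟨v, hvW, hvQ⟩ : ∃ v ∈ W', v ∉ Q := by
      by_contra hcon
      push Not at hcon
      have := Submodule.finrank_mono (R := F) (show W' ≤ Q from hcon)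
      omega
    refine ⟨_, (hU v hvQ).trans ?_⟩
    refine Submodule.eq_of_le_of_finrank_le (sup_le hQW' ?_) ?_
    · rwa [Submodule.span_singleton_le_iff_mem]
    · rw [Submodule.finrank_sup_span_singleton hvQ]; omega
  let t : Projectivization F ((Fin 7 → F) ⧸ Q) → ℕ :=
    fun L => (hypersurfacePts f ∩ (projPts (U L) \ projPts Q)).ncard
  have ht : ∀ L, t L ≤ q ^ 5 := by
    intro L
    obtain ⟨v, hv, rfl⟩ := hUs L
    simp only [t]
    rw [hU v hv]
    refine offplane_bound hq2 hcardF f hfdeg Q hQ hQS v hv fun h => hnosolid ⟨_, ?_, h⟩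
    rw [Submodule.finrank_sup_span_singleton hv]; omega
  obtain ⟨L₀, hL₀⟩ := hex W hW hQW
  obtain ⟨L₃, hL₃⟩ := hex W₃ hW₃ hQW₃
  have hL03 : L₀ ≠ L₃ := by
    rintro rfl
    exact hne (hL₀.symm.trans hL₃)
  have ht3 : t L₃ = 0 := by
    simp only [t]
    rw [hL₃, ← Set.inter_sdiff_assoc, hEq]
    simp
  have : Fintype (Projectivization F ((Fin 7 → F) ⧸ Q)) := Fintype.ofFinite _
  have hcard : Fintype.card (Projectivization F ((Fin 7 → F) ⧸ Q)) = q ^ 6 + q ^ 4 + q ^ 2 + 1 := by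
    have h4 : finrank F ((Fin 7 → F) ⧸ Q) = 4 := by
      have := Q.finrank_quotient_add_finrank
      simp at this
      omega
    rw [← Nat.card_eq_fintype_card, Projectivization.card_of_finrank F _ h4,
      Nat.card_eq_fintype_card, hcardF]
    simp only [Finset.sum_range_succ, Finset.sum_range_zero]
    ring
  have hcov : hypersurfacePts f \ projPts Q ⊆
      ⋃ L ∈ (Finset.univ : Finset (Projectivization F ((Fin 7 → F) ⧸ Q))),
        (hypersurfacePts f ∩ (projPts (U L) \ projPts Q)) := by
    rintro P ⟨hP1, hP2⟩
    have hP3 := hP2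
    rw [mem_projPts] at hP3
    simp only [Set.mem_iUnion]
    refine ⟨Projectivization.mk F _ (hnz _ hP3), Finset.mem_univ _, hP1, ?_, hP2⟩
    rw [hU _ hP3, mem_projPts]
    exact Submodule.mem_sup_right (Submodule.mem_span_singleton_self _)
  have hsum : (hypersurfacePts f \ projPts Q).ncard ≤ ∑ L, t L :=
    (Set.ncard_le_ncard hcov (Set.toFinite _)).trans (Finset.set_ncard_biUnion_le _ _)
  have hdiff := Set.ncard_sdiff_add_ncard_of_subset hQS (Set.toFinite _)
  rw [← Finset.add_sum_erase _ _ (Finset.mem_univ L₃), ht3, zero_add] at hsum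
  have hce : (Finset.univ.erase L₃).card = q ^ 6 + q ^ 4 + q ^ 2 := by
    rw [Finset.card_erase_of_mem (Finset.mem_univ _), Finset.card_univ, hcard]; rfl
  have hup : ∑ L ∈ Finset.univ.erase L₃, t L ≤ ∑ L ∈ Finset.univ.erase L₃, q ^ 5 :=
    Finset.sum_le_sum fun L _ => ht L
  have hconst : ∑ L ∈ Finset.univ.erase L₃, q ^ 5 = q ^ 11 + q ^ 9 + q ^ 7 := by
    rw [Finset.sum_const, hce, smul_eq_mul]; ring
  have heq : ∑ L ∈ Finset.univ.erase L₃, t L = ∑ L ∈ Finset.univ.erase L₃, q ^ 5 := by omega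
  have h0 := (Finset.sum_eq_sum_iff_of_le fun L _ => ht L).1 heq L₀
    (Finset.mem_erase.2 ⟨hL03, Finset.mem_univ _⟩)
  simp only [t] at h0
  rw [hL₀, ← Set.inter_sdiff_assoc] at h0
  have hQi : projPts Q ⊆ hypersurfacePts f ∩ projPts W := by
    intro P hP
    refine ⟨hQS hP, ?_⟩
    rw [mem_projPts] at hP ⊢
    exact hQW hP
  have := Set.ncard_sdiff_add_ncard_of_subset hQi (Set.toFinite _)
  omega
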